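/- Let α ∈ (0,1/24). There exists δ ∈ (0,1), depending only on α, with the following property: for every x = (x1,x2) in the closure of D⁺ with x2 ≤ x1 ≤ δ and every measurable ω : ℝ×(0,∞) → ℝ which is odd in x1 and satisfies χ_{A(x)} ≤ ω ≤ 1 on D⁺, one has u1(x) := −∫_{D⁺} K1(x,y) ω(y) dy ≤ −(1/(50α))·x1^{1−2α}. -/

import Mathlib

open MeasureTheory

noncomputable section

/-- Euclidean distance between points of `ℝ²` written as pairs. -/
def edist2 (p q : ℝ × ℝ) : ℝ := Real.sqrt ((p.1 - q.1) ^ 2 + (p.2 - q.2) ^ 2)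

/-- The open quadrant `D⁺ = (0,∞) × (0,∞)`. -/
def Dplus : Set (ℝ × ℝ) := Set.Ioi 0 ×ˢ Set.Ioi 0

/-- `K1(x,y) = (y₂-x₂)/|x-y|^{2+2α} - (y₂-x₂)/|x-ỹ|^{2+2α}
  - (y₂+x₂)/|x+y|^{2+2α} + (y₂+x₂)/|x-ȳ|^{2+2α}`, where `ỹ = (-y₁,y₂)`, `ȳ = (y₁,-y₂)`. -/
def K1 (α : ℝ) (x y : ℝ × ℝ) : ℝ :=
  (y.2 - x.2) / edist2 x y ^ (2 + 2 * α)
  - (y.2 - x.2) / edist2 x (-y.1, y.2) ^ (2 + 2 * α)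
  - (y.2 + x.2) / edist2 x (-y.1, -y.2) ^ (2 + 2 * α)
  + (y.2 + x.2) / edist2 x (y.1, -y.2) ^ (2 + 2 * α)

/-- `K2(x,y) = (y₁-x₁)/|x-y|^{2+2α} + (y₁+x₁)/|x-ỹ|^{2+2α}
  - (y₁+x₁)/|x+y|^{2+2α} - (y₁-x₁)/|x-ȳ|^{2+2α}`, where `ỹ = (-y₁,y₂)`, `ȳ = (y₁,-y₂)`. -/
def K2 (α : ℝ) (x y : ℝ × ℝ) : ℝ :=
  (y.1 - x.1) / edist2 x y ^ (2 + 2 * α)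
  + (y.1 + x.1) / edist2 x (-y.1, y.2) ^ (2 + 2 * α)
  - (y.1 + x.1) / edist2 x (-y.1, -y.2) ^ (2 + 2 * α)
  - (y.1 - x.1) / edist2 x (y.1, -y.2) ^ (2 + 2 * α)

/-- The triangle `A(x) = {y : x₁ < y₁ < x₁+1, x₂ < y₂ < x₂ + (y₁ - x₁)}`. -/
def Atri (x : ℝ × ℝ) : Set (ℝ × ℝ) :=
  {y : ℝ × ℝ | x.1 < y.1 ∧ y.1 < x.1 + 1 ∧ x.2 < y.2 ∧ y.2 < x.2 + (y.1 - x.1)}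

/-- One component of the singular kernel: `v / |(u,v)|^{2+2α}`. -/
def halfKernel (α u v : ℝ) : ℝ := v * (u ^ 2 + v ^ 2) ^ (-(1 + α))

/-- The difference of `halfKernel` at `y - x` and at `y` minus the reflection of `x`. -/
def pairKernel (α : ℝ) (x y : ℝ × ℝ) : ℝ :=
  halfKernel α (y.1 - x.1) (y.2 - x.2) - halfKernel α (y.1 + x.1) (y.2 - x.2)

/-- A radial majorant, integrable on the plane for `α ∈ (0, 1/2)`. -/
def radialMajorant (α r : ℝ) : ℝ := if r ≤ 1 then r ^ (-1 - 2 * α) else r ^ (-2 - 2 * α)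

lemma edist2_rpow (α : ℝ) (p q : ℝ × ℝ) :
    edist2 p q ^ (2 + 2 * α) = ((p.1 - q.1) ^ 2 + (p.2 - q.2) ^ 2) ^ (1 + α) := by
  rw [edist2, Real.sqrt_eq_rpow, ← Real.rpow_mul (by positivity)]
  congr 1
  ring

lemma div_rpow_eq (α v a : ℝ) (ha : 0 ≤ a) : v / a ^ (1 + α) = v * a ^ (-(1 + α)) := by
  rw [Real.rpow_neg ha, div_eq_mul_inv]

lemma K1_eq_pairKernel (α : ℝ) (x y : ℝ × ℝ) :
    K1 α x y = pairKernel α x y - pairKernel α x (y.1, -y.2) := by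
  simp only [K1, pairKernel, halfKernel, edist2_rpow]
  rw [div_rpow_eq _ _ _ (by positivity), div_rpow_eq _ _ _ (by positivity),
    div_rpow_eq _ _ _ (by positivity), div_rpow_eq _ _ _ (by positivity)]
  rw [show (x.1 - y.1) ^ 2 = (y.1 - x.1) ^ 2 by ring,
    show (x.1 - -y.1) ^ 2 = (y.1 + x.1) ^ 2 by ring,
    show (x.2 - y.2) ^ 2 = (y.2 - x.2) ^ 2 by ring,
    show (x.2 - -y.2) ^ 2 = (-y.2 - x.2) ^ 2 by ring]
  ring

lemma measurable_pairKernel (α : ℝ) (x : ℝ × ℝ) : Measurable (pairKernel α x) := by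
  unfold pairKernel halfKernel
  fun_prop

lemma rpow_neg_sub_le {a b p : ℝ} (ha : 0 < a) (hab : a ≤ b) (hp : p ≤ 2) :
    a ^ (-p) - b ^ (-p) ≤ 2 * (b - a) * a ^ (-p - 1) := by
  have hb : 0 < b := ha.trans_le hab
  have hr : (a / b) ^ (2 : ℝ) ≤ (a / b) ^ p :=
    Real.rpow_le_rpow_of_exponent_ge (by positivity) ((div_le_one hb).2 hab) hp
  rw [Real.rpow_two, Real.div_rpow ha.le hb.le] at hr
  have hap : 0 < a ^ p := by positivity
  have hbp : 0 < b ^ p := by positivity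
  rw [Real.rpow_sub_one ha.ne', Real.rpow_neg ha.le, Real.rpow_neg hb.le]
  have h1 : (a ^ p)⁻¹ - (b ^ p)⁻¹ = (a ^ p)⁻¹ * (1 - a ^ p / b ^ p) := by
    field_simp
  have h2 : 2 * (b - a) * ((a ^ p)⁻¹ / a) = (a ^ p)⁻¹ * (2 * (b / a - 1)) := by
    field_simp
  rw [h1, h2]
  refine mul_le_mul_of_nonneg_left ?_ (by positivity)
  have h3 : a / b * (b / a) = 1 := by field_simp
  have h4 : 1 ≤ b / a := (one_le_div ha).2 hab
  have h5 : a / b ≤ 1 := (div_le_one hb).2 hab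
  have h6 : 0 < a / b := by positivity
  nlinarith [sq_nonneg (a / b - 1)]

lemma rpow_neg_one_add_le {α a b : ℝ} (hα : 0 < α) (ha : 0 < a) (hab : a ≤ b) :
    b ^ (-(1 + α)) ≤ a ^ (-(1 + α)) :=
  Real.rpow_le_rpow_of_nonpos ha hab (by linarith)

lemma halfKernel_le {α u u' v : ℝ} (hα : 0 < α) (hv : 0 ≤ v) (hu : u ^ 2 ≤ u' ^ 2) :
    halfKernel α u' v ≤ halfKernel α u v := by
  rcases hv.eq_or_lt with rfl | hv
  · simp [halfKernel]
  · exact mul_le_mul_of_nonneg_left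
      (rpow_neg_one_add_le hα (by positivity) (by linarith)) hv.le

lemma halfKernel_nonneg {α u v : ℝ} (hv : 0 ≤ v) : 0 ≤ halfKernel α u v := by
  unfold halfKernel; positivity

lemma halfKernel_neg (α u v : ℝ) : halfKernel α u (-v) = -halfKernel α u v := by
  simp [halfKernel]

lemma pairKernel_nonneg {α : ℝ} {x y : ℝ × ℝ} (hα : 0 < α) (hx : 0 ≤ x.1) (hy : 0 ≤ y.1)
    (hxy : x.2 ≤ y.2) : 0 ≤ pairKernel α x y :=
  sub_nonneg.2 (halfKernel_le hα (sub_nonneg.2 hxy) (by nlinarith))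

lemma pairKernel_eq_neg (α : ℝ) (x y : ℝ × ℝ) :
    pairKernel α x y =
      -(halfKernel α (y.1 - x.1) (x.2 - y.2) - halfKernel α (y.1 + x.1) (x.2 - y.2)) := by
  rw [pairKernel, ← neg_sub x.2 y.2, halfKernel_neg, halfKernel_neg]
  ring

lemma pairKernel_nonpos {α : ℝ} {x y : ℝ × ℝ} (hα : 0 < α) (hx : 0 ≤ x.1) (hy : 0 ≤ y.1)
    (hxy : y.2 ≤ x.2) : pairKernel α x y ≤ 0 := by
  rw [pairKernel_eq_neg]
  exact neg_nonpos.2 (sub_nonneg.2 (halfKernel_le hα (sub_nonneg.2 hxy) (by nlinarith)))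

lemma radialMajorant_nonneg {α r : ℝ} (hr : 0 ≤ r) : 0 ≤ radialMajorant α r := by
  unfold radialMajorant; split_ifs <;> positivity

lemma abs_pairKernel_le {α : ℝ} {x y : ℝ × ℝ} (hα : 0 < α) (hα' : α < 1 / 2) (hx : 0 ≤ x.1)
    (hy : 0 < y.1) :
    |pairKernel α x y| ≤ (1 + 8 * x.1 * (x.1 + 1)) * radialMajorant α ‖y - x‖ := by
  set r := ‖y - x‖ with hr
  have hr0 : 0 ≤ r := norm_nonneg _
  have h1 : |y.1 - x.1| ≤ r := by simpa using norm_fst_le (y - x)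
  have h2 : |y.2 - x.2| ≤ r := by simpa using norm_snd_le (y - x)
  rcases eq_or_ne (y.2 - x.2) 0 with hv | hv
  · have : pairKernel α x y = 0 := by simp [pairKernel, halfKernel, hv]
    rw [this, abs_zero]
    exact mul_nonneg (by positivity) (radialMajorant_nonneg hr0)
  have hrpos : 0 < r := (abs_pos.2 hv).trans_le h2
  set a := (y.1 - x.1) ^ 2 + (y.2 - x.2) ^ 2 with ha
  set b := (y.1 + x.1) ^ 2 + (y.2 - x.2) ^ 2 with hb
  have hra : r ^ 2 ≤ a := by
    have : r = |y.1 - x.1| ∨ r = |y.2 - x.2| := by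
      rw [hr, Prod.norm_def]
      rcases max_choice ‖(y - x).1‖ ‖(y - x).2‖ with h | h
      · left; rw [h]; simp
      · right; rw [h]; simp
    rcases this with h | h <;> rw [h, sq_abs, ha] <;>
      nlinarith [sq_nonneg (y.1 - x.1), sq_nonneg (y.2 - x.2)]
  have hapos : 0 < a := by positivity
  have hba : b - a = 4 * x.1 * y.1 := by rw [ha, hb]; ring
  have hab : a ≤ b := by nlinarith
  have hpk : |pairKernel α x y| = |y.2 - x.2| * (a ^ (-(1 + α)) - b ^ (-(1 + α))) := by
    rw [pairKernel, halfKernel, halfKernel, ← mul_sub, abs_mul, abs_of_nonneg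
      (sub_nonneg.2 (rpow_neg_one_add_le hα hapos hab))]
  have hC : 0 ≤ 8 * x.1 * (x.1 + 1) := by positivity
  have hpow : ∀ e : ℝ, 0 ≤ e → a ^ (-e) ≤ r ^ (-(2 * e)) := by
    intro e he
    have : a ^ (-e) ≤ (r ^ 2) ^ (-e) :=
      Real.rpow_le_rpow_of_nonpos (by positivity) hra (by linarith)
    rwa [← Real.rpow_two, ← Real.rpow_mul hr0, mul_neg] at this
  rw [hpk, radialMajorant]
  split_ifs with hr1
  · calc |y.2 - x.2| * (a ^ (-(1 + α)) - b ^ (-(1 + α)))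
        ≤ r * r ^ (-(2 * (1 + α))) := by
          refine mul_le_mul h2 ?_ (sub_nonneg.2 (rpow_neg_one_add_le hα hapos hab)) hr0
          have := hpow (1 + α) (by linarith)
          have : 0 ≤ b ^ (-(1 + α)) := by positivity
          linarith
      _ = r ^ (-1 - 2 * α) := by
          rw [← Real.rpow_one_add' hr0 (by linarith)]; congr 1; ring
      _ ≤ _ := le_mul_of_one_le_left (by positivity) (by linarith)
  · push Not at hr1
    have hy1 : y.1 ≤ (x.1 + 1) * r := by
      have := (abs_le.1 h1).2
      nlinarith
    calc |y.2 - x.2| * (a ^ (-(1 + α)) - b ^ (-(1 + α)))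
        ≤ r * (8 * x.1 * (x.1 + 1) * r * r ^ (-(2 * (2 + α)))) := by
          refine mul_le_mul h2 ?_ (sub_nonneg.2 (rpow_neg_one_add_le hα hapos hab)) hr0
          refine (rpow_neg_sub_le hapos hab (by linarith)).trans ?_
          rw [hba, show -(1 + α) - 1 = -(2 + α) by ring]
          refine mul_le_mul ?_ (hpow _ (by linarith)) (by positivity) (by positivity)
          nlinarith
      _ = 8 * x.1 * (x.1 + 1) * r ^ (-2 - 2 * α) := by
          rw [show (-2 - 2 * α) = 1 + (1 + -(2 * (2 + α))) by ring,
            Real.rpow_one_add' hr0 (by linarith), Real.rpow_one_add' hr0 (by linarith)]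
          ring
      _ ≤ _ := mul_le_mul_of_nonneg_right (by linarith) (by positivity)

lemma integrable_radialMajorant_norm {α : ℝ} (hα : 0 < α) (hα' : α < 1 / 2) :
    Integrable (fun y : ℝ × ℝ => radialMajorant α ‖y‖) := by
  rw [integrable_fun_norm_addHaar volume (f := radialMajorant α)]
  have hdim : Module.finrank ℝ (ℝ × ℝ) - 1 = 1 := by simp
  simp only [hdim, pow_one, smul_eq_mul]
  rw [← Set.Ioc_union_Ioi_eq_Ioi zero_le_one, integrableOn_union]
  constructor
  · have h : IntegrableOn (fun r : ℝ => r ^ (-2 * α)) (Set.Ioc 0 1) := by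
      rw [integrableOn_Ioc_iff_integrableOn_Ioo]
      exact (intervalIntegral.integrableOn_Ioo_rpow_iff one_pos).2 (by linarith)
    refine h.congr_fun (fun r hr => ?_) measurableSet_Ioc
    simp only [radialMajorant, if_pos hr.2]
    rw [← Real.rpow_one_add' hr.1.le (by linarith)]
    congr 1; ring
  · refine (integrableOn_Ioi_rpow_of_lt (a := -1 - 2 * α) (by linarith) one_pos).congr_fun
      (fun r hr => ?_) measurableSet_Ioi
    have hr : (1 : ℝ) < r := hr
    simp only [radialMajorant, if_neg hr.not_ge]
    rw [← Real.rpow_one_add' (by linarith) (by linarith)]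
    congr 1; ring

lemma integrableOn_pairKernel {α : ℝ} {x : ℝ × ℝ} (hα : 0 < α) (hα' : α < 1 / 2)
    (hx : 0 ≤ x.1) : IntegrableOn (pairKernel α x) (Set.Ioi 0 ×ˢ Set.univ) := by
  have h := ((integrable_radialMajorant_norm hα hα').comp_sub_right x).const_mul
    (1 + 8 * x.1 * (x.1 + 1))
  refine h.integrableOn.mono' (measurable_pairKernel α x).aestronglyMeasurable ?_
  refine (ae_restrict_iff' (measurableSet_Ioi.prod MeasurableSet.univ)).2 (.of_forall ?_)
  rintro y ⟨hy, -⟩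
  exact abs_pairKernel_le hα hα' hx hy

lemma integrableOn_K1 {α : ℝ} {x : ℝ × ℝ} (hα : 0 < α) (hα' : α < 1 / 2)
    (hx : 0 ≤ x.1) : IntegrableOn (K1 α x) Dplus := by
  have h := integrableOn_pairKernel hα hα' hx
  have hrefl : MeasurePreserving (fun y : ℝ × ℝ => (y.1, -y.2)) volume volume :=
    (MeasurePreserving.id volume).prod (Measure.measurePreserving_neg volume)
  have hemb : MeasurableEmbedding (fun y : ℝ × ℝ => (y.1, -y.2)) :=
    ((MeasurableEquiv.refl ℝ).prodCongr (MeasurableEquiv.neg ℝ)).measurableEmbedding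
  have h' : IntegrableOn (fun y : ℝ × ℝ => pairKernel α x (y.1, -y.2))
      (Set.Ioi 0 ×ˢ Set.univ) := by
    have := (hrefl.integrableOn_comp_preimage hemb).2 h
    refine this.mono_set ?_
    rintro y ⟨hy, -⟩
    exact ⟨hy, trivial⟩
  have hsub : Dplus ⊆ Set.Ioi 0 ×ˢ Set.univ := Set.prod_mono_right (Set.subset_univ _)
  refine ((h.mono_set hsub).sub (h'.mono_set hsub)).congr (.of_forall fun y => ?_)
  exact (K1_eq_pairKernel α x y).symm

lemma halfKernel_le_poisson {α v : ℝ} (hα : 0 < α) (hv : 0 < v) (u : ℝ) :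
    halfKernel α u v ≤ v ^ (-2 * α) * v⁻¹ * (1 + (u / v) ^ 2)⁻¹ := by
  have hpos : 0 < u ^ 2 + v ^ 2 := by positivity
  have h1 : (u ^ 2 + v ^ 2) ^ (-α) ≤ v ^ (-2 * α) := by
    rw [show -2 * α = 2 * -α by ring, Real.rpow_mul hv.le, Real.rpow_two]
    exact Real.rpow_le_rpow_of_nonpos (by positivity) (by nlinarith [sq_nonneg u]) (by linarith)
  have h2 : halfKernel α u v = (u ^ 2 + v ^ 2) ^ (-α) * v⁻¹ * (1 + (u / v) ^ 2)⁻¹ := by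
    rw [halfKernel, show -(1 + α) = -α - 1 by ring, Real.rpow_sub_one hpos.ne']
    field_simp
    ring
  rw [h2]
  gcongr

lemma integral_poisson {v : ℝ} (hv : 0 < v) (c : ℝ) :
    ∫ u : ℝ, v⁻¹ * (1 + ((u - c) / v) ^ 2)⁻¹ = Real.pi := by
  rw [integral_sub_right_eq_self (fun u : ℝ => v⁻¹ * (1 + (u / v) ^ 2)⁻¹) c,
    integral_const_mul, Measure.integral_comp_div (fun u : ℝ => (1 + u ^ 2)⁻¹),
    integral_univ_inv_one_add_sq, abs_of_pos hv, smul_eq_mul]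
  field_simp

lemma integrable_poisson {v : ℝ} (hv : 0 < v) (c : ℝ) :
    Integrable fun u : ℝ => v⁻¹ * (1 + ((u - c) / v) ^ 2)⁻¹ :=
  ((integrable_inv_one_add_sq.comp_div hv.ne').const_mul v⁻¹).comp_sub_right c

lemma neg_pairKernel_slice_le {α y₂ : ℝ} {x : ℝ × ℝ} (hα : 0 < α) (hx : 0 ≤ x.1)
    (hy : y₂ < x.2) :
    ∫ y₁ in Set.Ioi 0, -pairKernel α x (y₁, y₂) ≤ Real.pi * (x.2 - y₂) ^ (-2 * α) := by
  have hv : 0 < x.2 - y₂ := sub_pos.2 hy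
  have hint := (integrable_poisson hv x.1).const_mul ((x.2 - y₂) ^ (-2 * α))
  calc ∫ y₁ in Set.Ioi 0, -pairKernel α x (y₁, y₂)
      ≤ ∫ y₁ in Set.Ioi 0, (x.2 - y₂) ^ (-2 * α) *
          ((x.2 - y₂)⁻¹ * (1 + ((y₁ - x.1) / (x.2 - y₂)) ^ 2)⁻¹) := by
        refine integral_mono_of_nonneg ?_ hint.integrableOn ?_
        · refine (ae_restrict_iff' measurableSet_Ioi).2 (.of_forall fun y₁ h => ?_)
          exact neg_nonneg.2 (pairKernel_nonpos hα hx (le_of_lt h) hy.le)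
        · refine .of_forall fun y₁ => ?_
          simp only [pairKernel_eq_neg, neg_neg]
          have := halfKernel_le_poisson hα hv (y₁ - x.1)
          have := halfKernel_nonneg (α := α) (u := y₁ + x.1) hv.le
          linarith
    _ ≤ ∫ y₁, (x.2 - y₂) ^ (-2 * α) *
          ((x.2 - y₂)⁻¹ * (1 + ((y₁ - x.1) / (x.2 - y₂)) ^ 2)⁻¹) :=
        setIntegral_le_integral hint (.of_forall fun y₁ => by positivity)
    _ = Real.pi * (x.2 - y₂) ^ (-2 * α) := by
        rw [integral_const_mul, integral_poisson hv, mul_comm]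

lemma neg_integral_pairKernel_strip_le {α : ℝ} {x : ℝ × ℝ} (hα : 0 < α) (hα' : α < 1 / 2)
    (hx : 0 ≤ x.1) (hx₂ : 0 ≤ x.2) :
    -∫ y in Set.Ioi 0 ×ˢ Set.Ioo 0 x.2, pairKernel α x y ≤
      Real.pi * (x.2 ^ (1 - 2 * α) / (1 - 2 * α)) := by
  have hG : IntegrableOn (pairKernel α x) (Set.Ioi 0 ×ˢ Set.Ioo 0 x.2) :=
    (integrableOn_pairKernel hα hα' hx).mono_set (Set.prod_mono_right (Set.subset_univ _))
  have hI : IntervalIntegrable (fun t : ℝ => t ^ (-2 * α)) volume 0 x.2 :=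
    intervalIntegral.intervalIntegrable_rpow' (by linarith)
  have hI' : IntervalIntegrable (fun t : ℝ => (x.2 - t) ^ (-2 * α)) volume 0 x.2 := by
    simpa using (hI.comp_sub_left x.2).symm
  have hfub : ∫ y in Set.Ioi 0 ×ˢ Set.Ioo 0 x.2, -pairKernel α x y =
      ∫ y₂ in Set.Ioo 0 x.2, ∫ y₁ in Set.Ioi 0, -pairKernel α x (y₁, y₂) := by
    rw [Measure.volume_eq_prod, ← Measure.prod_restrict]
    refine integral_prod_symm _ ?_
    rw [Measure.prod_restrict, ← Measure.volume_eq_prod]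
    exact hG.neg
  rw [← integral_neg, hfub]
  calc ∫ y₂ in Set.Ioo 0 x.2, ∫ y₁ in Set.Ioi 0, -pairKernel α x (y₁, y₂)
      ≤ ∫ y₂ in Set.Ioo 0 x.2, Real.pi * (x.2 - y₂) ^ (-2 * α) := by
        refine integral_mono_of_nonneg ?_ ?_ ?_
        · refine (ae_restrict_iff' measurableSet_Ioo).2 (.of_forall fun y₂ h => ?_)
          exact setIntegral_nonneg measurableSet_Ioi fun y₁ h₁ =>
            neg_nonneg.2 (pairKernel_nonpos hα hx (le_of_lt h₁) h.2.le)
        · exact (((intervalIntegrable_iff_integrableOn_Ioo_of_le hx₂).1 hI').const_mul _)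
        · refine (ae_restrict_iff' measurableSet_Ioo).2 (.of_forall fun y₂ h => ?_)
          exact neg_pairKernel_slice_le hα hx h.2
    _ = Real.pi * (x.2 ^ (1 - 2 * α) / (1 - 2 * α)) := by
        rw [integral_const_mul, ← integral_Ioc_eq_integral_Ioo,
          ← intervalIntegral.integral_of_le hx₂,
          intervalIntegral.integral_comp_sub_left (fun t : ℝ => t ^ (-2 * α)) x.2,
          integral_rpow (Or.inl (by linarith))]
        rw [sub_self, sub_zero, Real.zero_rpow (by linarith)]
        ring_nf

lemma continuous_halfKernel {α v : ℝ} (hv : 0 < v) : Continuous fun u => halfKernel α u v := by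
  unfold halfKernel
  refine continuous_const.mul (Continuous.rpow_const (by fun_prop) fun u => Or.inl ?_)
  positivity

lemma integral_pairKernel_slice {α a b y₂ : ℝ} {x : ℝ × ℝ} (hv : x.2 < y₂) :
    ∫ t in (x.1 + a)..(x.1 + b), pairKernel α x (t, y₂) =
      (∫ u in a..(a + 2 * x.1), halfKernel α u (y₂ - x.2)) -
        ∫ u in b..(b + 2 * x.1), halfKernel α u (y₂ - x.2) := by
  have hc : Continuous fun u => halfKernel α u (y₂ - x.2) := continuous_halfKernel (sub_pos.2 hv)
  have hi : ∀ c d, IntervalIntegrable (fun u => halfKernel α u (y₂ - x.2)) volume c d :=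
    fun c d => hc.intervalIntegrable c d
  have h1 : Continuous fun t => halfKernel α (t - x.1) (y₂ - x.2) := hc.comp (by fun_prop)
  have h2 : Continuous fun t => halfKernel α (t + x.1) (y₂ - x.2) := hc.comp (by fun_prop)
  simp only [pairKernel]
  rw [intervalIntegral.integral_sub (h1.intervalIntegrable _ _) (h2.intervalIntegrable _ _),
    intervalIntegral.integral_comp_sub_right (fun u => halfKernel α u (y₂ - x.2)),
    intervalIntegral.integral_comp_add_right (fun u => halfKernel α u (y₂ - x.2)),
    intervalIntegral.integral_interval_sub_interval_comm (hi _ _) (hi _ _) (hi _ _)]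
  congr 2 <;> ring

lemma le_integral_pairKernel_slice {α y₂ : ℝ} {x : ℝ × ℝ} (hα : 0 < α) (hx : 0 ≤ x.1)
    (hv : x.2 < y₂) (hv' : y₂ ≤ x.2 + 1) :
    2 * x.1 * halfKernel α (y₂ - x.2 + 2 * x.1) (y₂ - x.2) - 2 * x.1 ≤
      ∫ t in (x.1 + (y₂ - x.2))..(x.1 + 1), pairKernel α x (t, y₂) := by
  rw [integral_pairKernel_slice hv]
  set v := y₂ - x.2 with hvdef
  have hv0 : 0 < v := sub_pos.2 hv
  have hc : Continuous fun u => halfKernel α u v := continuous_halfKernel hv0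
  have h1 : ∫ u in v..(v + 2 * x.1), halfKernel α (v + 2 * x.1) v ≤
      ∫ u in v..(v + 2 * x.1), halfKernel α u v := by
    refine intervalIntegral.integral_mono_on (by linarith) (by simp)
      (hc.intervalIntegrable _ _) fun u hu => halfKernel_le hα hv0.le ?_
    nlinarith [hu.1, hu.2]
  have h2 : ∫ u in (1 : ℝ)..(1 + 2 * x.1), halfKernel α u v ≤
      ∫ u in (1 : ℝ)..(1 + 2 * x.1), (1 : ℝ) := by
    refine intervalIntegral.integral_mono_on (by linarith)
      (hc.intervalIntegrable _ _) (by simp) fun u hu => ?_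
    have : (u ^ 2 + v ^ 2) ^ (-(1 + α)) ≤ 1 :=
      Real.rpow_le_one_of_one_le_of_nonpos (by nlinarith [hu.1]) (by linarith)
    have h0 : 0 ≤ (u ^ 2 + v ^ 2) ^ (-(1 + α)) := by positivity
    unfold halfKernel
    nlinarith
  simp only [intervalIntegral.integral_const, smul_eq_mul] at h1 h2
  linarith

lemma le_halfKernel_far {α v s : ℝ} (hα : 0 < α) (hs : 0 < s) (hv : 10 * s ≤ v) :
    (5 / 2) ^ (-(1 + α)) * v ^ (-1 - 2 * α) ≤ halfKernel α (v + 2 * s) v := by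
  have hv0 : 0 < v := by linarith
  have h1 : (5 / 2 * v ^ 2) ^ (-(1 + α)) ≤ ((v + 2 * s) ^ 2 + v ^ 2) ^ (-(1 + α)) :=
    rpow_neg_one_add_le hα (by positivity) (by nlinarith)
  rw [Real.mul_rpow (by norm_num) (by positivity), ← Real.rpow_two, ← Real.rpow_mul hv0.le] at h1
  rw [halfKernel, show -1 - 2 * α = 1 + 2 * -(1 + α) by ring,
    Real.rpow_one_add' hv0.le (by linarith)]
  rw [Real.rpow_two] at h1
  nlinarith [mul_le_mul_of_nonneg_left h1 hv0.le]

lemma measurableSet_Atri (x : ℝ × ℝ) : MeasurableSet (Atri x) := by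
  unfold Atri
  measurability

lemma Atri_subset_Dplus {x : ℝ × ℝ} (hx : 0 ≤ x.1) (hx₂ : 0 ≤ x.2) : Atri x ⊆ Dplus :=
  fun _ hy => ⟨hx.trans_lt hy.1, hx₂.trans_lt hy.2.2.1⟩

lemma integral_indicator_Atri_slice (x : ℝ × ℝ) (f : ℝ × ℝ → ℝ) {y₂ : ℝ} (hv : x.2 < y₂)
    (hv' : y₂ ≤ x.2 + 1) :
    ∫ y₁, (Atri x).indicator f (y₁, y₂) =
      ∫ t in (x.1 + (y₂ - x.2))..(x.1 + 1), f (t, y₂) := by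
  rw [intervalIntegral.integral_of_le (by linarith), integral_Ioc_eq_integral_Ioo,
    ← integral_indicator measurableSet_Ioo]
  refine integral_congr_ae (.of_forall fun t => ?_)
  have : (t, y₂) ∈ Atri x ↔ t ∈ Set.Ioo (x.1 + (y₂ - x.2)) (x.1 + 1) := by
    simp only [Atri, Set.mem_ofPred_eq, Set.mem_Ioo]
    constructor
    · rintro ⟨h1, h2, h3, h4⟩; exact ⟨by linarith, h2⟩
    · rintro ⟨h1, h2⟩; exact ⟨by linarith, h2, hv, by linarith⟩
  by_cases h : (t, y₂) ∈ Atri x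
  · simp [Set.indicator_of_mem h, Set.indicator_of_mem (this.1 h)]
  · simp [Set.indicator_of_notMem h, Set.indicator_of_notMem (mt this.2 h)]

lemma le_integral_pairKernel_Atri {α : ℝ} {x : ℝ × ℝ} (hα : 0 < α) (hα' : α < 1 / 2)
    (hx : 0 < x.1) (hx₁ : 10 * x.1 ≤ 1) (hx₂ : 0 ≤ x.2) :
    2 * x.1 * (5 / 2) ^ (-(1 + α)) * (((10 * x.1) ^ (-2 * α) - 1) / (2 * α)) - 2 * x.1 ≤
      ∫ y in Atri x, pairKernel α x y := by
  have hA : Integrable ((Atri x).indicator (pairKernel α x)) := by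
    rw [integrable_indicator_iff (measurableSet_Atri x)]
    refine (integrableOn_pairKernel hα hα' hx.le).mono_set ?_
    exact (Atri_subset_Dplus hx.le hx₂).trans (Set.prod_mono_right (Set.subset_univ _))
  rw [← integral_indicator (measurableSet_Atri x), Measure.volume_eq_prod]
  rw [Measure.volume_eq_prod] at hA
  rw [integral_prod_symm _ hA]
  have hfar : x.2 + 10 * x.1 ≤ x.2 + 1 := by linarith
  set c : ℝ := 2 * x.1 * (5 / 2) ^ (-(1 + α)) with hc
  have hIcont : ContinuousOn (fun t : ℝ => c * (t - x.2) ^ (-1 - 2 * α))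
      (Set.Icc (x.2 + 10 * x.1) (x.2 + 1)) :=
    continuousOn_const.mul (ContinuousOn.rpow_const (by fun_prop) fun t ht =>
      Or.inl (by have := ht.1; linarith))
  have hI : IntegrableOn (fun t : ℝ => c * (t - x.2) ^ (-1 - 2 * α))
      (Set.Ioo (x.2 + 10 * x.1) (x.2 + 1)) :=
    hIcont.integrableOn_Icc.mono_set Set.Ioo_subset_Icc_self
  have hJ : IntegrableOn (fun _ : ℝ => 2 * x.1) (Set.Ioo x.2 (x.2 + 1)) :=
    integrableOn_const (by simp)
  have hval : c * (((10 * x.1) ^ (-2 * α) - 1) / (2 * α)) - 2 * x.1 =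
      ∫ t, ((Set.Ioo (x.2 + 10 * x.1) (x.2 + 1)).indicator
          (fun t : ℝ => c * (t - x.2) ^ (-1 - 2 * α)) t -
        (Set.Ioo x.2 (x.2 + 1)).indicator (fun _ => 2 * x.1) t) := by
    rw [integral_sub ((integrable_indicator_iff measurableSet_Ioo).2 hI)
      ((integrable_indicator_iff measurableSet_Ioo).2 hJ), integral_indicator measurableSet_Ioo,
      integral_indicator measurableSet_Ioo, ← integral_Ioc_eq_integral_Ioo,
      ← intervalIntegral.integral_of_le hfar, intervalIntegral.integral_const_mul,
      intervalIntegral.integral_comp_sub_right (fun t : ℝ => t ^ (-1 - 2 * α)),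
      integral_rpow (Or.inr ⟨by linarith, ?_⟩)]
    · rw [show -1 - 2 * α + 1 = -2 * α by ring, add_sub_cancel_left, add_sub_cancel_left,
        Real.one_rpow, setIntegral_const, Measure.real, Real.volume_Ioo, add_sub_cancel_left,
        ENNReal.ofReal_one, ENNReal.toReal_one, one_smul]
      field_simp
      ring
    · rw [add_sub_cancel_left, add_sub_cancel_left, Set.uIcc_of_le hx₁]
      intro h
      have := h.1
      linarith
  rw [hval]
  refine integral_mono (((integrable_indicator_iff measurableSet_Ioo).2 hI).sub
    ((integrable_indicator_iff measurableSet_Ioo).2 hJ)) hA.integral_prod_right fun y₂ => ?_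
  by_cases hy : y₂ ∈ Set.Ioo x.2 (x.2 + 1)
  · simp only [Set.indicator_of_mem hy]
    rw [integral_indicator_Atri_slice x _ hy.1 hy.2.le]
    refine le_trans (sub_le_sub_right ?_ _)
      (le_integral_pairKernel_slice hα hx.le hy.1 hy.2.le)
    have hv0 : 0 < y₂ - x.2 := sub_pos.2 hy.1
    by_cases hy' : y₂ ∈ Set.Ioo (x.2 + 10 * x.1) (x.2 + 1)
    · rw [Set.indicator_of_mem hy', hc, mul_assoc]
      exact mul_le_mul_of_nonneg_left
        (le_halfKernel_far hα hx (by linarith [hy'.1])) (by positivity)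
    · rw [Set.indicator_of_notMem hy']
      exact mul_nonneg (by positivity) (halfKernel_nonneg hv0.le)
  · have hy' : y₂ ∉ Set.Ioo (x.2 + 10 * x.1) (x.2 + 1) :=
      fun h => hy ⟨by linarith [h.1], h.2⟩
    simp only [Set.indicator_of_notMem hy, Set.indicator_of_notMem hy', sub_zero]
    refine integral_nonneg fun y₁ => Set.indicator_nonneg (fun y h => ?_) _
    exact pairKernel_nonneg hα hx.le (hx.le.trans h.1.le) h.2.2.1.le

lemma setIntegral_K1_mul_ge {α : ℝ} {x : ℝ × ℝ} {ω : ℝ × ℝ → ℝ} (hα : 0 < α) (hα' : α < 1 / 2)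
    (hx : 0 ≤ x.1) (hx₂ : 0 ≤ x.2) (hω : Measurable ω)
    (hb : ∀ y ∈ Dplus, (Atri x).indicator (fun _ => (1 : ℝ)) y ≤ ω y ∧ ω y ≤ 1) :
    (∫ y in Set.Ioi 0 ×ˢ Set.Ioo 0 x.2, pairKernel α x y) + ∫ y in Atri x, pairKernel α x y ≤
      ∫ y in Dplus, K1 α x y * ω y := by
  have hDm : MeasurableSet Dplus := measurableSet_Ioi.prod measurableSet_Ioi
  have hSm : MeasurableSet (Set.Ioi (0 : ℝ) ×ˢ Set.Ioo 0 x.2) :=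
    measurableSet_Ioi.prod measurableSet_Ioo
  have hAm := measurableSet_Atri x
  have hS : Set.Ioi (0 : ℝ) ×ˢ Set.Ioo 0 x.2 ⊆ Dplus :=
    Set.prod_mono_right Set.Ioo_subset_Ioi_self
  have hA := Atri_subset_Dplus hx hx₂
  have hGD : IntegrableOn (pairKernel α x) Dplus :=
    (integrableOn_pairKernel hα hα' hx).mono_set (Set.prod_mono_right (Set.subset_univ _))
  have hω0 : ∀ y ∈ Dplus, 0 ≤ ω y := fun y hy =>
    (Set.indicator_nonneg (fun _ _ => zero_le_one) y).trans (hb y hy).1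
  have hK : IntegrableOn (fun y => K1 α x y * ω y) Dplus := by
    have h := integrableOn_K1 hα hα' hx
    refine Integrable.mono h (h.aestronglyMeasurable.mul hω.aestronglyMeasurable) ?_
    refine (ae_restrict_iff' hDm).2 (.of_forall fun y hy => ?_)
    rw [norm_mul]
    refine mul_le_of_le_one_right (norm_nonneg _) ?_
    rw [Real.norm_of_nonneg (hω0 y hy)]
    exact (hb y hy).2
  rw [← Set.inter_eq_self_of_subset_right hS, ← Set.inter_eq_self_of_subset_right hA,
    ← setIntegral_indicator hSm, ← setIntegral_indicator hAm,
    ← integral_add (hGD.indicator hSm) (hGD.indicator hAm)]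
  refine setIntegral_mono_on ((hGD.indicator hSm).add (hGD.indicator hAm)) hK hDm fun y hy => ?_
  have hy₁ : 0 < y.1 := hy.1
  have hy₂ : 0 < y.2 := hy.2
  have hN : pairKernel α x (y.1, -y.2) ≤ 0 :=
    pairKernel_nonpos hα hx hy₁.le (by dsimp only; linarith)
  have h0 := hω0 y hy
  have h1 := (hb y hy).2
  rw [K1_eq_pairKernel]
  rcases lt_or_ge y.2 x.2 with hlt | hge
  · have hyA : y ∉ Atri x := fun h => hlt.not_gt h.2.2.1
    have hyS : y ∈ Set.Ioi (0 : ℝ) ×ˢ Set.Ioo 0 x.2 := ⟨hy₁, hy₂, hlt⟩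
    have hG : pairKernel α x y ≤ 0 := pairKernel_nonpos hα hx hy₁.le hlt.le
    rw [Set.indicator_of_mem hyS, Set.indicator_of_notMem hyA]
    nlinarith
  · have hyS : y ∉ Set.Ioi (0 : ℝ) ×ˢ Set.Ioo 0 x.2 := fun h => hge.not_gt h.2.2
    have hG : 0 ≤ pairKernel α x y := pairKernel_nonneg hα hx hy₁.le hge
    rw [Set.indicator_of_notMem hyS, zero_add]
    by_cases hyA : y ∈ Atri x
    · have h1' := (hb y hy).1
      rw [Set.indicator_of_mem hyA] at h1' ⊢
      rw [le_antisymm h1 h1']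
      linarith
    · rw [Set.indicator_of_notMem hyA]
      exact mul_nonneg (by linarith) h0

lemma le_five_halves_rpow_mul_ten_rpow {α : ℝ} (hα : 0 < α) (hα' : α < 1 / 24) :
    (0.314 : ℝ) ≤ (5 / 2) ^ (-(1 + α)) * 10 ^ (-2 * α) := by
  have h1 : ((5 : ℝ) / 2) ^ (-(1 + α)) * 10 ^ (-2 * α) = 2 / 5 * 250 ^ (-α) := by
    rw [show -(1 + α) = -1 + -α by ring, Real.rpow_add (by norm_num), Real.rpow_neg_one,
      show -2 * α = 2 * -α by ring, Real.rpow_mul (by norm_num), mul_assoc,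
      ← Real.mul_rpow (by norm_num) (by positivity), Real.rpow_two]
    norm_num
  have h2 : (250 : ℝ) ^ (-(1 / 24) : ℝ) ≤ 250 ^ (-α) :=
    Real.rpow_le_rpow_of_exponent_le (by norm_num) (by linarith)
  have h3 : ((1.27 : ℝ) ^ 24) ^ (-(1 / 24) : ℝ) ≤ 250 ^ (-(1 / 24) : ℝ) :=
    Real.rpow_le_rpow_of_nonpos (by norm_num) (by norm_num) (by norm_num)
  have h4 : ((1.27 : ℝ) ^ 24) ^ (-(1 / 24) : ℝ) = 1.27⁻¹ := by
    rw [← Real.rpow_natCast, ← Real.rpow_mul (by norm_num), ← Real.rpow_neg_one]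
    norm_num
  have h5 : (0.785 : ℝ) ≤ 1.27⁻¹ := by norm_num
  rw [h1]
  linarith

lemma five_halves_rpow_le {α : ℝ} (hα : 0 < α) : ((5 : ℝ) / 2) ^ (-(1 + α)) ≤ 2 / 5 := by
  calc ((5 : ℝ) / 2) ^ (-(1 + α)) ≤ (5 / 2) ^ (-1 : ℝ) :=
        Real.rpow_le_rpow_of_exponent_le (by norm_num) (by linarith)
    _ = 2 / 5 := by rw [Real.rpow_neg_one]; norm_num

lemma pi_mul_div_le {α : ℝ} (hα' : α < 1 / 24) :
    Real.pi * α / (1 - 2 * α) ≤ 0.144 := by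
  rw [div_le_iff₀ (by linarith)]
  nlinarith [Real.pi_lt_d2, Real.pi_gt_three]

/-- For `α ∈ (0,1/24)` there is `δ ∈ (0,1)`, depending only on `α`, such that
for every `x` in the closure of `D⁺` with `x₂ ≤ x₁ ≤ δ` and every measurable `ω`, odd in `x₁`,
with `χ_{A(x)} ≤ ω ≤ 1` on `D⁺`:
`u₁(x) = -∫_{D⁺} K1(x,y) ω(y) dy ≤ -(1/(50α))·x₁^{1-2α}`. -/
theorem stmt7 (α : ℝ) (hα : α ∈ Set.Ioo (0 : ℝ) (1/24)) :
    ∃ δ ∈ Set.Ioo (0 : ℝ) 1,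
      ∀ x : ℝ × ℝ, x ∈ closure Dplus → x.2 ≤ x.1 → x.1 ≤ δ →
      ∀ ω : ℝ × ℝ → ℝ, Measurable ω →
        (∀ y : ℝ × ℝ, 0 < y.2 → ω (-y.1, y.2) = -ω (y.1, y.2)) →
        (∀ y ∈ Dplus, (Atri x).indicator (fun _ => (1 : ℝ)) y ≤ ω y ∧ ω y ≤ 1) →
        -∫ y in Dplus, K1 α x y * ω y ≤ -(1 / (50 * α)) * x.1 ^ (1 - 2 * α) := by
  obtain ⟨hα0, hα1⟩ := hα
  have hexp : (12 : ℝ) ≤ 1 / (2 * α) := by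
    rw [le_div_iff₀ (by positivity)]; linarith
  refine ⟨(1 / 4) ^ (1 / (2 * α)), ⟨by positivity,
    Real.rpow_lt_one (by norm_num) (by norm_num) (by positivity)⟩, ?_⟩
  intro x hxD hx21 hxδ ω hω _ hb
  rw [Dplus, closure_prod_eq, closure_Ioi] at hxD
  obtain ⟨hx₁, hx₂⟩ : 0 ≤ x.1 ∧ 0 ≤ x.2 := hxD
  have hge := setIntegral_K1_mul_ge hα0 (by linarith) hx₁ hx₂ hω hb
  rcases hx₁.eq_or_lt with h0 | hpos
  · have hK : ∀ y, K1 α x y = 0 := fun y => by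
      simp [K1_eq_pairKernel, pairKernel, ← h0]
    simp [hK, ← h0, Real.zero_rpow (show 1 - 2 * α ≠ 0 by linarith)]
  have hx10 : 10 * x.1 ≤ 1 := by
    have : ((1 : ℝ) / 4) ^ (1 / (2 * α)) ≤ (1 / 4) ^ (12 : ℝ) :=
      Real.rpow_le_rpow_of_exponent_ge (by norm_num) (by norm_num) hexp
    norm_num at this hxδ
    linarith
  have hbad := neg_integral_pairKernel_strip_le hα0 (by linarith) hx₁ hx₂
  have hgood := le_integral_pairKernel_Atri hα0 (by linarith) hpos hx10 hx₂
  set X := x.1 ^ (-2 * α) with hX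
  have hX4 : 4 ≤ X := by
    have h : ((1 / 4 : ℝ) ^ (1 / (2 * α))) ^ (-2 * α) ≤ X :=
      Real.rpow_le_rpow_of_nonpos hpos hxδ (by linarith)
    rw [← Real.rpow_mul (by norm_num), show 1 / (2 * α) * (-2 * α) = -1 by field_simp,
      Real.rpow_neg_one] at h
    norm_num at h
    exact h
  have hxX : x.1 ^ (1 - 2 * α) = x.1 * X := by
    rw [hX, ← Real.rpow_one_add' hx₁ (by linarith)]
    congr 1; ring
  have hx2 : x.2 ^ (1 - 2 * α) ≤ x.1 * X :=
    hxX ▸ Real.rpow_le_rpow hx₂ hx21 (by linarith)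
  rw [Real.mul_rpow (by norm_num) hx₁, ← hX] at hgood
  have hk := le_five_halves_rpow_mul_ten_rpow hα0 hα1
  have hc := five_halves_rpow_le hα0
  have hπ := pi_mul_div_le hα1
  set c : ℝ := (5 / 2) ^ (-(1 + α))
  set d : ℝ := 10 ^ (-2 * α)
  have hkey : X / 50 ≤ c * (d * X - 1) - 2 * α - Real.pi * α / (1 - 2 * α) * X := by
    nlinarith
  have hbad' : Real.pi * (x.2 ^ (1 - 2 * α) / (1 - 2 * α)) ≤
      Real.pi * (x.1 * X / (1 - 2 * α)) := by
    have : 0 < 1 - 2 * α := by linarith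
    gcongr
  have hcomb : 1 / (50 * α) * (x.1 * X) ≤
      2 * x.1 * c * ((d * X - 1) / (2 * α)) - 2 * x.1 - Real.pi * (x.1 * X / (1 - 2 * α)) := by
    have e1 : 1 / (50 * α) * (x.1 * X) = x.1 / α * (X / 50) := by field_simp
    have e2 : 2 * x.1 * c * ((d * X - 1) / (2 * α)) - 2 * x.1 -
        Real.pi * (x.1 * X / (1 - 2 * α)) =
        x.1 / α * (c * (d * X - 1) - 2 * α - Real.pi * α / (1 - 2 * α) * X) := by
      have : 1 - 2 * α ≠ 0 := by linarith
      field_simp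
    rw [e1, e2]
    exact mul_le_mul_of_nonneg_left hkey (by positivity)
  rw [hxX]
  linarith
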